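/- arXiv:1201.2390 — 2 statements merged into one kernel-verified Lean document; each statement's English description precedes it below -/
import Mathlib

section
/- (Convergence Theorem.) Let f be ω-regularly smooth on D with constant h and f'(x₀) = I, let g satisfy ‖g(x'') − g(x')‖ ≤ ψ(t)‖x'' − x'‖ for all x', x'' ∈ B̄(x₀, t) ⊆ D with ψ nondecreasing, let ‖f(x₀) + g(x₀)‖ ≤ a, suppose W(t) = Φ_h(t) + Ψ(t) has a unique zero t₊ in [0, χ], suppose B̄(x₀, t₊) ⊆ D, and assume a < Ω(χ) + h·χ − Ψ(χ). Then: (1) the equation f(x) + g(x) = 0 has a unique root x₊ in B̄(x₀, t₊); (2) the Newton iterates x_{n+1} = x_n − [f'(x_n)]⁻¹(f(x_n) + g(x_n)) are defined for all n (in particular f'(x_n) is invertible), belong to B̄(x₀, t₊), and converge to x₊; (3) for all n: ‖x_{n+1} − x_n‖ ≤ t_{n+1} − t_n and ‖x₊ − x_n‖ ≤ t₊ − t_n, where t₀ = 0, t_{n+1} = t_n + (a − Ω(χ) + Ω(χ − t_n) − t_n·h + Ψ(t_n))/(h + ω(χ − t_n)); moreover {t_n} monotonically increases and converges to t₊. 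-/
/-!
The proof is Kantorovich's majorant principle with the scalar majorant `W = Φ_h + Ψ`.

Regular smoothness gives, on `B̄(x₀, χ) ∩ D`, the bound
`‖f'(x'') - f'(x')‖ ≤ ω(χ - T) - ω(χ - T - s)` whenever `‖x' - x₀‖ ≤ T` and `‖x'' - x'‖ ≤ s`
(`regular_smooth_bound`, which uses that increments of a concave function decrease). With
`x' = x₀` it shows that `f'(x)` is invertible with `‖f'(x)⁻¹‖ ≤ 1 / (h + ω(χ - T))`
(`exists_equiv_of_near_id`); integrated along a segment (`taylor_bound`), and combined with
`‖g(y) - g(x)‖ ≤ Ψ(T + R) - Ψ(T)` (`lipschitz_integral_bound`), it gives for `F = f + g`,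
`‖x - x₀‖ ≤ T`, `‖y - x‖ ≤ R`, `T + R ≤ t₊` the majorant inequality
`‖F(y) - F(x) - f'(x)(y - x)‖ ≤ W(T + R) - W(T) + R (h + ω(χ - T))`.

The iterates then satisfy `‖F(xₙ)‖ ≤ W(tₙ)` and `‖xₙ₊₁ - xₙ‖ ≤ tₙ₊₁ - tₙ` by induction, so they
converge to a root. Applying the same inequality with `y` any root in `B̄(x₀, t₊)` yields
`‖y - xₙ‖ ≤ t₊ - tₙ` by induction; this is both the error estimate and the uniqueness of the root.
-/

open Set Filter Topology MeasureTheory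

/-! ### Regular smoothness -/

/-- Increments of a concave function over an interval of fixed length decrease as the interval
moves to the right. -/
lemma concave_increment_anti {ω : ℝ → ℝ} (hc : ConcaveOn ℝ (Ici 0) ω) {p q s : ℝ}
    (hp : 0 ≤ p) (hpq : p ≤ q) (hs : 0 ≤ s) : ω (q + s) - ω q ≤ ω (p + s) - ω p := by
  rcases eq_or_lt_of_le hs with rfl | hs'
  · simp
  have hL : 0 < q + s - p := by linarith
  have h1 := hc.2 (show p ∈ Ici 0 from hp) (show q + s ∈ Ici 0 by simp; linarith)
    (show 0 ≤ (q - p) / (q + s - p) from div_nonneg (by linarith) hL.le)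
    (show 0 ≤ s / (q + s - p) by positivity) (by field_simp; ring)
  have h2 := hc.2 (show p ∈ Ici 0 from hp) (show q + s ∈ Ici 0 by simp; linarith)
    (show 0 ≤ s / (q + s - p) by positivity)
    (show 0 ≤ (q - p) / (q + s - p) from div_nonneg (by linarith) hL.le) (by field_simp; ring)
  have e1 : ((q - p) / (q + s - p)) • p + (s / (q + s - p)) • (q + s) = p + s := by
    simp only [smul_eq_mul]; field_simp; ring
  have e2 : (s / (q + s - p)) • p + ((q - p) / (q + s - p)) • (q + s) = q := by
    simp only [smul_eq_mul]; field_simp; ring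
  have e3 : (s / (q + s - p)) + ((q - p) / (q + s - p)) = 1 := by field_simp; ring
  rw [e1] at h1
  rw [e2] at h2
  simp only [smul_eq_mul] at h1 h2
  have e4 : (q - p) / (q + s - p) = 1 - s / (q + s - p) := by linarith
  rw [e4] at h1 h2
  nlinarith

/-- The modulus-of-continuity form of the regular smoothness inequality. -/
lemma omega_increment_of_inv {ω ωinv : ℝ → ℝ} (hω_mono : StrictMonoOn ω (Ici 0))
    (hω_conc : ConcaveOn ℝ (Ici 0) ω)
    (hωinv_right : ∀ s, 0 ≤ s → 0 ≤ ωinv s ∧ ω (ωinv s) = s)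
    {m δ s c : ℝ} (hm : 0 ≤ m) (hδ : 0 ≤ δ) (hs : 0 ≤ s)
    (hreg : ωinv (m + δ) - ωinv m ≤ s) (hc : 0 ≤ c) (hcm : c ≤ ωinv m) :
    δ ≤ ω (c + s) - ω c := by
  obtain ⟨h1, h2⟩ := hωinv_right m hm
  obtain ⟨h3, h4⟩ := hωinv_right (m + δ) (by linarith)
  have h5 : ω (ωinv (m + δ)) ≤ ω (ωinv m + s) :=
    hω_mono.monotoneOn h3 (add_nonneg h1 hs) (by linarith)
  have := concave_increment_anti hω_conc hc hcm hs
  linarith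

section RegularSmoothness

variable {X : Type*} [NormedAddCommGroup X] [NormedSpace ℝ X]

/-- Regular smoothness compared with the base point `x₀`, where the derivative is the identity. -/
lemma regular_smooth_base {D : Set X} {x₀ : X} (hx₀ : x₀ ∈ D) {f' : X → X →L[ℝ] X}
    (hfx₀ : f' x₀ = ContinuousLinearMap.id ℝ X) {ω ωinv : ℝ → ℝ}
    (hω_mono : StrictMonoOn ω (Ici 0)) (hω_conc : ConcaveOn ℝ (Ici 0) ω)
    (hωinv_right : ∀ s, 0 ≤ s → 0 ≤ ωinv s ∧ ω (ωinv s) = s)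
    {h : ℝ} (hh1 : h ≤ 1) (hhf : ∀ x ∈ D, h ≤ ‖f' x‖)
    (hreg : ∀ x' ∈ D, ∀ x'' ∈ D,
      ωinv (min ‖f' x'‖ ‖f' x''‖ - h + ‖f' x'' - f' x'‖)
        - ωinv (min ‖f' x'‖ ‖f' x''‖ - h) ≤ ‖x'' - x'‖)
    {χ : ℝ} (hχ : χ = ωinv (1 - h)) {x : X} (hx : x ∈ D) {T : ℝ} (hxT : ‖x - x₀‖ ≤ T)
    (hT : T ≤ χ) :
    ‖f' x - ContinuousLinearMap.id ℝ X‖ ≤ 1 - h - ω (χ - T) := by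
  obtain ⟨hχ0, hχω⟩ := hωinv_right (1 - h) (by linarith)
  rw [← hχ] at hχ0 hχω
  have hT0 : 0 ≤ T := (norm_nonneg _).trans hxT
  have hmono := hω_mono.monotoneOn (a := χ - T) (b := χ) (by simpa using hT) hχ0 (by linarith)
  rcases subsingleton_or_nontrivial X with hX | hX
  · have : f' x - ContinuousLinearMap.id ℝ X = 0 := Subsingleton.elim _ _
    rw [this, norm_zero]; linarith
  have hn1 : ‖f' x₀‖ = 1 := by rw [hfx₀]; exact ContinuousLinearMap.norm_id
  have hr := (hreg x₀ hx₀ x hx).trans hxT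
  have hm : 0 ≤ min ‖f' x₀‖ ‖f' x‖ - h := by
    have := le_min (hhf x₀ hx₀) (hhf x hx); linarith
  have hmδ : 1 - h ≤ min ‖f' x₀‖ ‖f' x‖ - h + ‖f' x - f' x₀‖ := by
    have h1 : ‖f' x₀‖ - ‖f' x‖ ≤ ‖f' x - f' x₀‖ := by
      rw [norm_sub_rev]; exact norm_sub_norm_le _ _
    have h2 := norm_nonneg (f' x - f' x₀)
    rcases min_cases ‖f' x₀‖ ‖f' x‖ with h3 | h3 <;> linarith
  obtain ⟨h3, h4⟩ := hωinv_right _ (le_trans (by linarith) hmδ)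
  have hχle : χ ≤ ωinv (min ‖f' x₀‖ ‖f' x‖ - h + ‖f' x - f' x₀‖) := by
    rw [← hω_mono.le_iff_le hχ0 h3, h4, hχω]; exact hmδ
  have := omega_increment_of_inv hω_mono hω_conc hωinv_right (c := χ - T) hm
    (norm_nonneg (f' x - f' x₀)) hT0 hr (by linarith) (by linarith)
  rw [sub_add_cancel, hχω, hfx₀] at this
  exact this

/-- The derivative of `f` moves no faster than the derivative of the scalar majorant. -/
lemma regular_smooth_bound {D : Set X} {x₀ : X} (hx₀ : x₀ ∈ D) {f' : X → X →L[ℝ] X}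
    (hfx₀ : f' x₀ = ContinuousLinearMap.id ℝ X) {ω ωinv : ℝ → ℝ}
    (hω_mono : StrictMonoOn ω (Ici 0)) (hω_conc : ConcaveOn ℝ (Ici 0) ω)
    (hωinv_right : ∀ s, 0 ≤ s → 0 ≤ ωinv s ∧ ω (ωinv s) = s)
    {h : ℝ} (hh1 : h ≤ 1) (hhf : ∀ x ∈ D, h ≤ ‖f' x‖)
    (hreg : ∀ x' ∈ D, ∀ x'' ∈ D,
      ωinv (min ‖f' x'‖ ‖f' x''‖ - h + ‖f' x'' - f' x'‖)
        - ωinv (min ‖f' x'‖ ‖f' x''‖ - h) ≤ ‖x'' - x'‖)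
    {χ : ℝ} (hχ : χ = ωinv (1 - h)) {x y : X} (hx : x ∈ D) (hy : y ∈ D) {T s : ℝ}
    (hxT : ‖x - x₀‖ ≤ T) (hys : ‖y - x‖ ≤ s) (hT : T + s ≤ χ) :
    ‖f' y - f' x‖ ≤ ω (χ - T) - ω (χ - T - s) := by
  have hT0 : 0 ≤ T := (norm_nonneg _).trans hxT
  have hs0 : 0 ≤ s := (norm_nonneg _).trans hys
  have hmono := hω_mono.monotoneOn (a := χ - T - s) (b := χ - T)
    (by simp; linarith) (by simp; linarith) (by linarith)
  rcases subsingleton_or_nontrivial X with hX | hX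
  · have : f' y - f' x = 0 := Subsingleton.elim _ _
    rw [this, norm_zero]; linarith
  have hbx := regular_smooth_base hx₀ hfx₀ hω_mono hω_conc hωinv_right hh1 hhf hreg hχ hx
    hxT (by linarith)
  have hyT : ‖y - x₀‖ ≤ T + s := by
    have : y - x₀ = (x - x₀) + (y - x) := by abel
    rw [this]; exact (norm_add_le _ _).trans (add_le_add hxT hys)
  have hby := regular_smooth_base hx₀ hfx₀ hω_mono hω_conc hωinv_right hh1 hhf hreg hχ hy
    hyT hT
  have hlow : ∀ z, 1 - ‖f' z - ContinuousLinearMap.id ℝ X‖ ≤ ‖f' z‖ := by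
    intro z
    have h1 := norm_sub_norm_le (ContinuousLinearMap.id ℝ X) (f' z)
    rw [norm_sub_rev, ContinuousLinearMap.norm_id] at h1
    linarith
  have hm : 0 ≤ min ‖f' x‖ ‖f' y‖ - h := by
    have := le_min (hhf x hx) (hhf y hy); linarith
  have hm2 : ω (χ - T - s) ≤ min ‖f' x‖ ‖f' y‖ - h := by
    have h1 := hlow x
    have h2 := hlow y
    rw [← sub_sub] at hby
    have : ω (χ - T - s) + h ≤ min ‖f' x‖ ‖f' y‖ := le_min (by linarith) (by linarith)
    linarith
  obtain ⟨h3, h4⟩ := hωinv_right _ hm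
  have hle : χ - T - s ≤ ωinv (min ‖f' x‖ ‖f' y‖ - h) := by
    rw [← hω_mono.le_iff_le (by simp; linarith) h3, h4]; exact hm2
  have := omega_increment_of_inv hω_mono hω_conc hωinv_right hm
    (norm_nonneg (f' y - f' x)) hs0 ((hreg x hx y hy).trans hys) (by linarith) hle
  rwa [sub_add_cancel] at this

end RegularSmoothness

/-! ### Estimates along segments and invertibility -/

section Estimates

variable {X : Type*} [NormedAddCommGroup X] [NormedSpace ℝ X]

/-- Neumann-series invertibility, with the bound on the inverse. -/
lemma exists_equiv_of_near_id [CompleteSpace X] {A : X →L[ℝ] X} {κ : ℝ} (hκ : 0 < κ)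
    (hA : ‖A - ContinuousLinearMap.id ℝ X‖ ≤ 1 - κ) :
    ∃ B : X ≃L[ℝ] X, (B : X →L[ℝ] X) = A ∧ ∀ v, ‖B.symm v‖ ≤ ‖v‖ / κ := by
  have hlt : ‖(1 : X →L[ℝ] X) - A‖ < 1 := by
    rw [norm_sub_rev]; exact lt_of_le_of_lt hA (by linarith)
  refine ⟨ContinuousLinearEquiv.unitsEquiv ℝ X (Units.oneSub _ hlt), ?_, ?_⟩
  · ext v
    simp
  · intro v
    set B := ContinuousLinearEquiv.unitsEquiv ℝ X (Units.oneSub _ hlt) with hB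
    have hBA : ∀ w, B w = A w := by intro w; simp [hB]
    set w := B.symm v with hw
    have hv : v = A w := by rw [← hBA, hw]; simp
    rw [le_div_iff₀ hκ]
    have h1 : ‖(A - ContinuousLinearMap.id ℝ X) w‖ ≤ (1 - κ) * ‖w‖ :=
      (ContinuousLinearMap.le_opNorm _ _).trans
        (mul_le_mul_of_nonneg_right hA (norm_nonneg _))
    have h2 : w = A w - (A - ContinuousLinearMap.id ℝ X) w := by simp
    have h3 : ‖w‖ ≤ ‖A w‖ + ‖(A - ContinuousLinearMap.id ℝ X) w‖ := by
      conv_lhs => rw [h2]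
      exact norm_sub_le _ _
    rw [hv]
    linarith

/-- First-order Taylor remainder along a segment, when the derivative deviates from its initial
value by at most `ω c - ω (c - s)` at distance `s`. -/
lemma taylor_bound {D : Set X} (hD : Convex ℝ D) {f : X → X} {f' : X → X →L[ℝ] X}
    (hf : ∀ x ∈ D, HasFDerivWithinAt f (f' x) D x) {ω : ℝ → ℝ}
    (hω_cont : ContinuousOn ω (Ici 0)) {x y : X} (hx : x ∈ D) (hy : y ∈ D) {c : ℝ}
    (hc : ‖y - x‖ ≤ c)
    (hbound : ∀ z ∈ D, ‖z - x‖ ≤ ‖y - x‖ → ‖f' z - f' x‖ ≤ ω c - ω (c - ‖z - x‖)) :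
    ‖f y - f x - f' x (y - x)‖ ≤ ‖y - x‖ * ω c - ∫ τ in (c - ‖y - x‖)..c, ω τ := by
  set r := ‖y - x‖ with hr
  have hr0 : 0 ≤ r := norm_nonneg _
  -- Extending `ω` by `ω 0` to the left makes its primitive differentiable everywhere.
  set w : ℝ → ℝ := fun τ => ω (max 0 τ) with hw
  have hwc : Continuous w := by
    refine hω_cont.comp_continuous (by fun_prop) ?_
    intro τ; simp
  have hpos : ∀ τ ∈ Icc (0 : ℝ) 1, 0 ≤ τ * r ∧ τ * r ≤ r := fun τ hτ =>
    ⟨mul_nonneg hτ.1 hr0, mul_le_of_le_one_left hr0 hτ.2⟩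
  have hmem : ∀ τ ∈ Icc (0 : ℝ) 1, x + τ • (y - x) ∈ D := fun τ hτ =>
    hD.add_smul_sub_mem hx hy hτ
  have hline : ∀ τ : ℝ, HasDerivAt (fun τ : ℝ => x + τ • (y - x)) (y - x) τ := by
    intro τ
    simpa using ((hasDerivAt_id τ).smul_const (y - x)).const_add x
  have hd : ∀ τ ∈ Icc (0 : ℝ) 1, HasDerivWithinAt
      (fun τ : ℝ => f (x + τ • (y - x)) - f x - τ • f' x (y - x))
      (f' (x + τ • (y - x)) (y - x) - f' x (y - x)) (Icc 0 1) τ := by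
    intro τ hτ
    have h1 := (hf _ (hmem τ hτ)).comp_hasDerivWithinAt τ (hline τ).hasDerivWithinAt
      (s := Icc 0 1) (fun σ hσ => hmem σ hσ)
    have h2 := ((hasDerivAt_id τ).smul_const (f' x (y - x))).hasDerivWithinAt (s := Icc 0 1)
    exact ((h1.sub_const (f x)).sub h2).congr_deriv (by simp)
  have hB : ∀ τ : ℝ, HasDerivAt
      (fun τ : ℝ => τ * (r * ω c) - ∫ u in (c - τ * r)..c, w u)
      (r * ω c - r * w (c - τ * r)) τ := by
    intro τ
    have h1 : HasDerivAt (fun v : ℝ => ∫ u in v..c, w u) (-w (c - τ * r)) (c - τ * r) :=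
      intervalIntegral.integral_hasDerivAt_left (hwc.intervalIntegrable _ _)
        (hwc.stronglyMeasurableAtFilter _ _) hwc.continuousAt
    have h2 : HasDerivAt (fun τ : ℝ => c - τ * r) (-r) τ := by
      simpa using ((hasDerivAt_id τ).mul_const r).const_sub c
    have h3 := h1.comp τ h2
    have h4 : HasDerivAt (fun τ : ℝ => τ * (r * ω c)) (r * ω c) τ := by
      simpa using (hasDerivAt_id τ).mul_const (r * ω c)
    exact (h4.sub h3).congr_deriv (by ring)
  have key := image_norm_le_of_norm_deriv_right_le_deriv_boundary
    (f := fun τ : ℝ => f (x + τ • (y - x)) - f x - τ • f' x (y - x)) (a := 0) (b := 1)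
    (fun τ hτ => (hd τ hτ).continuousWithinAt)
    (fun τ hτ => (hd τ ⟨hτ.1, hτ.2.le⟩).mono_of_mem_nhdsWithin
      (Icc_mem_nhdsGE_of_mem hτ)) (by simp) hB
    (by
      intro τ hτ
      have hτ' : τ ∈ Icc (0 : ℝ) 1 := ⟨hτ.1, hτ.2.le⟩
      have hdist : ‖x + τ • (y - x) - x‖ = τ * r := by
        rw [add_sub_cancel_left, norm_smul, Real.norm_of_nonneg hτ.1]
      have h1 := hbound _ (hmem τ hτ') (by rw [hdist]; exact (hpos τ hτ').2)
      rw [hdist] at h1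
      have h2 : w (c - τ * r) = ω (c - τ * r) := by
        simp only [hw]
        rw [max_eq_right]
        linarith [(hpos τ hτ').2]
      rw [h2, ← sub_apply, ← mul_sub, mul_comm]
      exact (ContinuousLinearMap.le_opNorm _ _).trans
        (mul_le_mul_of_nonneg_right h1 hr0))
    (right_mem_Icc.2 zero_le_one)
  have hint : ∫ τ in (c - r)..c, ω τ = ∫ τ in (c - r)..c, w τ := by
    refine intervalIntegral.integral_congr fun τ hτ => ?_
    rw [uIcc_of_le (by linarith)] at hτ
    simp only [hw]
    rw [max_eq_right]
    linarith [hτ.1]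
  rw [hint]
  simpa using key

lemma integral_le_right_of_monotoneOn {ψ : ℝ → ℝ} (hψ : MonotoneOn ψ (Ici 0)) {u v : ℝ}
    (hu : 0 ≤ u) (huv : u ≤ v) :
    ∫ τ in u..v, ψ τ ≤ (v - u) * ψ v := by
  have hi : IntervalIntegrable ψ volume u v :=
    (hψ.mono (by
      rw [uIcc_of_le huv]
      exact fun z hz => hu.trans hz.1)).intervalIntegrable
  have := intervalIntegral.integral_mono_on huv hi (intervalIntegrable_const (c := ψ v))
    (fun z hz => hψ (hu.trans hz.1) (hu.trans huv) hz.2)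
  simpa using this

lemma le_integral_left_of_monotoneOn {ψ : ℝ → ℝ} (hψ : MonotoneOn ψ (Ici 0)) {u v : ℝ}
    (hu : 0 ≤ u) (huv : u ≤ v) :
    (v - u) * ψ u ≤ ∫ τ in u..v, ψ τ := by
  have hi : IntervalIntegrable ψ volume u v :=
    (hψ.mono (by
      rw [uIcc_of_le huv]
      exact fun z hz => hu.trans hz.1)).intervalIntegrable
  have := intervalIntegral.integral_mono_on huv (intervalIntegrable_const (c := ψ u)) hi
    (fun z hz => hψ hu (hu.trans hz.1) hz.1)
  simpa using this

/-- Summing the Lipschitz bound `ψ` over a fine subdivision of the segment `[x, y]` bounds the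
increment of `g` by the integral of `ψ`: with `N` equal pieces the error is at most
`(ψ (T + r) - ψ T) r / N`. -/
lemma lipschitz_integral_bound {g : X → X} {x₀ : X} {ψ : ℝ → ℝ} (hψ : MonotoneOn ψ (Ici 0))
    {R : ℝ} (hg : ∀ t, 0 ≤ t → t ≤ R →
      ∀ x' ∈ Metric.closedBall x₀ t, ∀ x'' ∈ Metric.closedBall x₀ t,
        ‖g x'' - g x'‖ ≤ ψ t * ‖x'' - x'‖)
    {Ψ : ℝ → ℝ} (hΨ : ∀ u v, 0 ≤ u → u ≤ v → Ψ v - Ψ u = ∫ τ in u..v, ψ τ)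
    {x y : X} {T : ℝ} (hxT : ‖x - x₀‖ ≤ T) (hTR : T + ‖y - x‖ ≤ R) :
    ‖g y - g x‖ ≤ Ψ (T + ‖y - x‖) - Ψ T := by
  set r := ‖y - x‖ with hr
  have hr0 : 0 ≤ r := norm_nonneg _
  have hT0 : 0 ≤ T := (norm_nonneg _).trans hxT
  have hN : ∀ N : ℕ, ‖g y - g x‖ ≤
      Ψ (T + r) - Ψ T + (ψ (T + r) - ψ T) * r * (1 / ((N : ℝ) + 1)) := by
    intro N
    set d : ℝ := 1 / ((N : ℝ) + 1) with hd
    have hd0 : 0 < d := by positivity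
    have hNd : ((N : ℝ) + 1) * d = 1 := by rw [hd]; field_simp
    have ind : ∀ k : ℕ, k ≤ N + 1 → ‖g (x + ((k : ℝ) * d) • (y - x)) - g x‖ ≤
        Ψ (T + k * d * r) - Ψ T + (ψ (T + k * d * r) - ψ T) * r * d := by
      intro k
      induction k with
      | zero => intro _; simp
      | succ k ih =>
        intro hk
        have ih := ih (by omega)
        have hkN : ((k : ℝ) + 1) * d ≤ 1 := by
          have hk' : (k : ℝ) + 1 ≤ (N : ℝ) + 1 := by exact_mod_cast hk
          exact (mul_le_mul_of_nonneg_right hk' hd0.le).trans_eq hNd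
        push_cast
        set p := T + k * d * r with hp
        set q := T + (k + 1) * d * r with hq
        have hp0 : 0 ≤ p := by positivity
        have hpq : q - p = d * r := by rw [hp, hq]; ring
        have hpq' : p ≤ q := by
          have : 0 ≤ d * r := by positivity
          linarith
        have hqR : q ≤ R := by
          have : (k + 1) * d * r ≤ r := mul_le_of_le_one_left hr0 hkN
          linarith
        have hdist : ∀ θ : ℝ, 0 ≤ θ → ‖x + θ • (y - x) - x₀‖ ≤ T + θ * r := by
          intro θ hθ
          have : x + θ • (y - x) - x₀ = (x - x₀) + θ • (y - x) := by abel
          rw [this]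
          refine (norm_add_le _ _).trans (add_le_add hxT ?_)
          rw [norm_smul, Real.norm_of_nonneg hθ]
        have hstep := hg q (hp0.trans hpq') hqR (x + ((k : ℝ) * d) • (y - x))
          (by
            rw [mem_closedBall_iff_norm]
            exact (hdist _ (by positivity)).trans hpq')
          (x + (((k : ℝ) + 1) * d) • (y - x))
          (by
            rw [mem_closedBall_iff_norm]
            exact hdist _ (by positivity))
        have e : x + (((k : ℝ) + 1) * d) • (y - x) - (x + ((k : ℝ) * d) • (y - x))
            = d • (y - x) := by
          rw [add_sub_add_left_eq_sub, ← sub_smul]; congr 1; ring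
        rw [e, norm_smul, Real.norm_of_nonneg hd0.le] at hstep
        have hint := le_integral_left_of_monotoneOn hψ hp0 hpq'
        rw [← hΨ p q hp0 hpq', hpq] at hint
        have htri := norm_sub_le_norm_sub_add_norm_sub (g (x + (((k : ℝ) + 1) * d) • (y - x)))
          (g (x + ((k : ℝ) * d) • (y - x))) (g x)
        rw [← hr] at hstep
        nlinarith
    have := ind (N + 1) le_rfl
    push_cast at this
    rw [hNd] at this
    simpa using this
  have hlim : Tendsto (fun N : ℕ => Ψ (T + r) - Ψ T +
      (ψ (T + r) - ψ T) * r * (1 / ((N : ℝ) + 1))) atTop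
      (𝓝 (Ψ (T + r) - Ψ T + (ψ (T + r) - ψ T) * r * 0)) :=
    (tendsto_one_div_add_atTop_nhds_zero_nat.const_mul _).const_add _
  rw [mul_zero, add_zero] at hlim
  exact ge_of_tendsto' hlim hN

end Estimates

/-! ### The scalar majorant -/

section Scalar

lemma primitive_sub {ψ Ψ : ℝ → ℝ} (hψ : MonotoneOn ψ (Ici 0))
    (hΨ : ∀ t, Ψ t = ∫ τ in (0 : ℝ)..t, ψ τ) {u v : ℝ} (hu : 0 ≤ u) (huv : u ≤ v) :
    Ψ v - Ψ u = ∫ τ in u..v, ψ τ := by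
  have hi : ∀ b, 0 ≤ b → IntervalIntegrable ψ volume 0 b := fun b hb =>
    (hψ.mono (by
      rw [uIcc_of_le hb]
      exact fun z hz => hz.1)).intervalIntegrable
  rw [hΨ, hΨ, intervalIntegral.integral_interval_sub_left (hi v (hu.trans huv)) (hi u hu)]

lemma primitive_continuousOn {ψ Ψ : ℝ → ℝ} (hψ : MonotoneOn ψ (Ici 0))
    (hΨ : ∀ t, Ψ t = ∫ τ in (0 : ℝ)..t, ψ τ) {b : ℝ} (hb : 0 ≤ b) :
    ContinuousOn Ψ (Icc 0 b) := by
  have hi : IntervalIntegrable ψ volume 0 b :=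
    (hψ.mono (by
      rw [uIcc_of_le hb]
      exact fun z hz => hz.1)).intervalIntegrable
  have := intervalIntegral.continuousOn_primitive_interval' hi left_mem_uIcc
  rw [uIcc_of_le hb] at this
  exact this.congr fun z _ => hΨ z

/-- The scalar Newton-type iteration for a majorant `W` that has `p` as its only zero in `[0, p]`
increases to `p`. The hypothesis `hle` says that a step with slope `-κ s` from `s` does not
overshoot `p`. -/
lemma scalar_iteration {W κ : ℝ → ℝ} {p K : ℝ} {t : ℕ → ℝ} (hp : 0 ≤ p) (hW0 : 0 < W 0)
    (hWp : W p = 0) (huniq : ∀ s ∈ Icc 0 p, W s = 0 → s = p)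
    (hcont : ContinuousOn W (Icc 0 p)) (hκ : ∀ s ∈ Icc 0 p, 0 < κ s ∧ κ s ≤ K)
    (hle : ∀ s ∈ Icc 0 p, W s ≤ (p - s) * κ s)
    (ht0 : t 0 = 0) (htrec : ∀ n, t (n + 1) = t n + W (t n) / κ (t n)) :
    (∀ n, t n ∈ Icc 0 p) ∧ Monotone t ∧ Tendsto t atTop (𝓝 p) := by
  have hWnn : ∀ s ∈ Icc 0 p, 0 ≤ W s := by
    intro s hs
    by_contra! hneg
    obtain ⟨z, hz, hWz⟩ := intermediate_value_Icc' hs.1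
      (hcont.mono (Icc_subset_Icc_right hs.2)) ⟨hneg.le, hW0.le⟩
    have hzp := huniq z ⟨hz.1, hz.2.trans hs.2⟩ hWz
    have : s = p := le_antisymm hs.2 (hzp ▸ hz.2)
    rw [this, hWp] at hneg
    exact lt_irrefl _ hneg
  have hmem : ∀ n, t n ∈ Icc 0 p := by
    intro n
    induction n with
    | zero => rw [ht0]; exact ⟨le_rfl, hp⟩
    | succ n ih =>
      have h1 : 0 ≤ W (t n) / κ (t n) := div_nonneg (hWnn _ ih) (hκ _ ih).1.le
      have h2 : W (t n) / κ (t n) ≤ p - t n := (div_le_iff₀ (hκ _ ih).1).2 (hle _ ih)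
      rw [htrec]
      exact ⟨add_nonneg ih.1 h1, by linarith⟩
  have hmono : Monotone t := by
    refine monotone_nat_of_le_succ fun n => ?_
    have h1 : 0 ≤ W (t n) / κ (t n) := div_nonneg (hWnn _ (hmem n)) (hκ _ (hmem n)).1.le
    rw [htrec]; linarith
  refine ⟨hmem, hmono, ?_⟩
  have hbdd : BddAbove (range t) := ⟨p, by rintro _ ⟨n, rfl⟩; exact (hmem n).2⟩
  have hlim := tendsto_atTop_ciSup hmono hbdd
  set L := ⨆ n, t n
  have hL : L ∈ Icc 0 p := isClosed_Icc.mem_of_tendsto hlim (Eventually.of_forall hmem)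
  have hWL : Tendsto (fun n => W (t n)) atTop (𝓝 (W L)) :=
    (hcont L hL).tendsto.comp (tendsto_nhdsWithin_iff.2 ⟨hlim, Eventually.of_forall hmem⟩)
  have hW0' : Tendsto (fun n => W (t n)) atTop (𝓝 0) := by
    have h1 : Tendsto (fun n => (t (n + 1) - t n) * K) atTop (𝓝 ((L - L) * K)) :=
      (((tendsto_add_atTop_iff_nat 1).2 hlim).sub hlim).mul_const K
    rw [sub_self, zero_mul] at h1
    refine squeeze_zero (fun n => hWnn _ (hmem n)) (fun n => ?_) h1
    have hk := hκ _ (hmem n)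
    have h2 : W (t n) = (t (n + 1) - t n) * κ (t n) := by
      rw [htrec, add_sub_cancel_left, div_mul_cancel₀ _ hk.1.ne']
    have h3 : 0 ≤ t (n + 1) - t n := sub_nonneg.2 (hmono n.le_succ)
    rw [h2]
    exact mul_le_mul_of_nonneg_left hk.2 h3
  have : L = p := huniq L hL (tendsto_nhds_unique hWL hW0')
  rwa [this] at hlim

end Scalar

/-! ### Convergence -/

/-- Convergence Theorem: Under regular smoothness of `f`, the ball-Lipschitz
condition on `g`, `‖f(x₀) + g(x₀)‖ ≤ a`, a unique zero `tstar` of `W` in `[0, χ]`,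
`B̄(x₀, tstar) ⊆ D` and `a < Ω(χ) + h·χ - Ψ(χ)`:
(1) the equation `f(x) + g(x) = 0` has a unique root `xstar` in `B̄(x₀, tstar)`;
(2) the Newton iterates `x_{n+1} = x_n - [f'(x_n)]⁻¹(f(x_n) + g(x_n))` are defined for
all `n`, belong to `B̄(x₀, tstar)`, and converge to `xstar`;
(3) `‖x_{n+1} - x_n‖ ≤ t_{n+1} - t_n` and `‖xstar - x_n‖ ≤ tstar - t_n` for all `n`,
where the majorant sequence `{t_n}` monotonically increases and converges to `tstar`. -/
theorem generalized_newton_kantorovich_convergence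
    {X : Type*} [NormedAddCommGroup X] [NormedSpace ℝ X] [CompleteSpace X]
    (D : Set X) (hD : Convex ℝ D) (x₀ : X) (hx₀ : x₀ ∈ D)
    (f g : X → X) (f' : X → X →L[ℝ] X)
    (hf : ∀ x ∈ D, HasFDerivWithinAt f (f' x) D x)
    (hfx₀ : f' x₀ = ContinuousLinearMap.id ℝ X)
    (ω ωinv ψ : ℝ → ℝ)
    (hω_cont : ContinuousOn ω (Set.Ici 0))
    (hω_mono : StrictMonoOn ω (Set.Ici 0))
    (hω_conc : ConcaveOn ℝ (Set.Ici 0) ω)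
    (hω0 : ω 0 = 0)
    (hω_nonneg : ∀ t, 0 ≤ t → 0 ≤ ω t)
    (hωinv_left : ∀ t, 0 ≤ t → ωinv (ω t) = t)
    (hωinv_right : ∀ s, 0 ≤ s → 0 ≤ ωinv s ∧ ω (ωinv s) = s)
    (h : ℝ) (hh0 : 0 ≤ h) (hh1 : h ≤ 1) (hhf : ∀ x ∈ D, h ≤ ‖f' x‖)
    (hreg : ∀ x' ∈ D, ∀ x'' ∈ D,
      ωinv (min ‖f' x'‖ ‖f' x''‖ - h + ‖f' x'' - f' x'‖)
        - ωinv (min ‖f' x'‖ ‖f' x''‖ - h) ≤ ‖x'' - x'‖)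
    (hψ_mono : MonotoneOn ψ (Set.Ici 0))
    (hψ_nonneg : ∀ t, 0 ≤ t → 0 ≤ ψ t)
    (hg : ∀ t, 0 ≤ t → Metric.closedBall x₀ t ⊆ D →
      ∀ x' ∈ Metric.closedBall x₀ t, ∀ x'' ∈ Metric.closedBall x₀ t,
        ‖g x'' - g x'‖ ≤ ψ t * ‖x'' - x'‖)
    (a : ℝ) (ha_pos : 0 < a) (ha : ‖f x₀ + g x₀‖ ≤ a)
    (χ : ℝ) (hχdef : χ = ωinv (1 - h))
    (Ω Ψ W : ℝ → ℝ)
    (hΩ : ∀ t, Ω t = ∫ τ in (0:ℝ)..t, ω τ)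
    (hΨ : ∀ t, Ψ t = ∫ τ in (0:ℝ)..t, ψ τ)
    (hW : ∀ t, W t = a - Ω χ + Ω (χ - t) - t * h + Ψ t)
    (tstar : ℝ) (htstar_mem : tstar ∈ Set.Icc 0 χ) (htstar_zero : W tstar = 0)
    (htstar_uniq : ∀ s ∈ Set.Icc 0 χ, W s = 0 → s = tstar)
    (hball : Metric.closedBall x₀ tstar ⊆ D)
    (hcond : a < Ω χ + h * χ - Ψ χ)
    (t : ℕ → ℝ) (ht0 : t 0 = 0)
    (htrec : ∀ n, t (n + 1) =
      t n + (a - Ω χ + Ω (χ - t n) - t n * h + Ψ (t n)) / (h + ω (χ - t n))) :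
    Monotone t ∧ Filter.Tendsto t Filter.atTop (nhds tstar) ∧
    ∃ xstar ∈ Metric.closedBall x₀ tstar,
      f xstar + g xstar = 0 ∧
      (∀ y ∈ Metric.closedBall x₀ tstar, f y + g y = 0 → y = xstar) ∧
      ∃ x : ℕ → X, x 0 = x₀ ∧
        (∀ n, ∃ A : X ≃L[ℝ] X, (A : X →L[ℝ] X) = f' (x n) ∧
          x (n + 1) = x n - A.symm (f (x n) + g (x n))) ∧
        (∀ n, x n ∈ Metric.closedBall x₀ tstar) ∧
        Filter.Tendsto x Filter.atTop (nhds xstar) ∧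
        (∀ n, ‖x (n + 1) - x n‖ ≤ t (n + 1) - t n) ∧
        (∀ n, ‖xstar - x n‖ ≤ tstar - t n) := by
  obtain ⟨hχ0, hχω⟩ := hωinv_right (1 - h) (by linarith)
  rw [← hχdef] at hχ0 hχω
  obtain ⟨hts0, htsχ⟩ := htstar_mem
  have hωm := hω_mono.monotoneOn
  have hΩsub : ∀ u v, 0 ≤ u → u ≤ v → Ω v - Ω u = ∫ τ in u..v, ω τ :=
    fun u v hu huv => primitive_sub hωm hΩ hu huv
  have hΨsub : ∀ u v, 0 ≤ u → u ≤ v → Ψ v - Ψ u = ∫ τ in u..v, ψ τ :=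
    fun u v hu huv => primitive_sub hψ_mono hΨ hu huv
  have hΩle : ∀ u v, 0 ≤ u → u ≤ v → Ω v - Ω u ≤ (v - u) * ω v := fun u v hu huv => by
    rw [hΩsub u v hu huv]; exact integral_le_right_of_monotoneOn hωm hu huv
  have hΨmono : ∀ u v, 0 ≤ u → u ≤ v → Ψ u ≤ Ψ v := fun u v hu huv => by
    have h1 := le_integral_left_of_monotoneOn hψ_mono hu huv
    rw [← hΨsub u v hu huv] at h1
    have h2 : 0 ≤ (v - u) * ψ u := mul_nonneg (by linarith) (hψ_nonneg u hu)
    linarith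
  have hΩ0 : Ω 0 = 0 := by rw [hΩ]; simp
  have hΨ0 : Ψ 0 = 0 := by rw [hΨ]; simp
  have hW0 : W 0 = a := by rw [hW, hΨ0]; simp
  have htslt : tstar < χ := by
    refine lt_of_le_of_ne htsχ fun heq => ?_
    have h1 := hW χ
    rw [← heq, htstar_zero, heq, sub_self, hΩ0] at h1
    linarith [mul_comm h χ]
  set κ : ℝ → ℝ := fun s => h + ω (χ - s) with hκdef
  have hκpos : ∀ s ∈ Icc 0 tstar, 0 < κ s ∧ κ s ≤ h + ω χ := by
    rintro s ⟨hs0, hs1⟩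
    have h1 : ω 0 < ω (χ - s) := hω_mono self_mem_Ici (by simp; linarith) (by linarith)
    have h2 : ω (χ - s) ≤ ω χ := hωm (by simp; linarith) hχ0 (by linarith)
    simp only [hκdef]
    constructor <;> linarith
  have hWcont : ContinuousOn W (Icc 0 tstar) := by
    have h1 : ContinuousOn (fun s => Ω (χ - s)) (Icc 0 tstar) :=
      (primitive_continuousOn hωm hΩ hχ0).comp (by fun_prop) fun s hs => by
        constructor <;> linarith [hs.1, hs.2]
    have h2 := primitive_continuousOn hψ_mono hΨ hts0
    have h3 : ContinuousOn (fun s => a - Ω χ + Ω (χ - s) - s * h + Ψ s) (Icc 0 tstar) :=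
      ((continuousOn_const.add h1).sub (continuousOn_id.mul continuousOn_const)).add h2
    exact h3.congr fun s _ => hW s
  have hWle : ∀ s ∈ Icc 0 tstar, W s ≤ (tstar - s) * κ s := by
    rintro s ⟨hs0, hs1⟩
    have h1 := hΩle (χ - tstar) (χ - s) (by linarith) (by linarith)
    have h2 := hΨmono s tstar hs0 hs1
    have h3 := hW tstar
    rw [htstar_zero] at h3
    rw [hW s]
    simp only [hκdef]
    nlinarith
  have htrecW : ∀ n, t (n + 1) = t n + W (t n) / κ (t n) := by
    intro n; rw [htrec, hW]
  obtain ⟨htmem, htmono, httend⟩ := scalar_iteration hts0 (hW0 ▸ ha_pos) htstar_zero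
    (fun s hs => htstar_uniq s ⟨hs.1, hs.2.trans htsχ⟩) hWcont hκpos hWle ht0 htrecW
  refine ⟨htmono, httend, ?_⟩
  have hgball : ∀ s, 0 ≤ s → s ≤ tstar →
      ∀ x' ∈ Metric.closedBall x₀ s, ∀ x'' ∈ Metric.closedBall x₀ s,
        ‖g x'' - g x'‖ ≤ ψ s * ‖x'' - x'‖ := fun s hs hs' =>
    hg s hs ((Metric.closedBall_subset_closedBall hs').trans hball)
  have hinD : ∀ x, ‖x - x₀‖ ≤ tstar → x ∈ D := fun x hx =>
    hball (mem_closedBall_iff_norm.2 hx)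
  -- The majorant inequality for `F = f + g`.
  have hmaj : ∀ x y : X, ∀ T R : ℝ, ‖x - x₀‖ ≤ T → ‖y - x‖ ≤ R → T + R ≤ tstar →
      ‖(f y + g y) - (f x + g x) - f' x (y - x)‖ ≤ W (T + R) - W T + R * κ T := by
    intro x y T R hxT hyR hTR
    have hT0 : 0 ≤ T := (norm_nonneg _).trans hxT
    have hR0 : 0 ≤ ‖y - x‖ := norm_nonneg _
    have hxD : x ∈ D := hinD x (by linarith)
    have hyD : y ∈ D := hinD y (by
      have := norm_sub_le_norm_sub_add_norm_sub y x x₀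
      linarith)
    have h1 := taylor_bound hD hf hω_cont hxD hyD (c := χ - T) (by linarith)
      (fun z hz hzx => regular_smooth_bound hx₀ hfx₀ hω_mono hω_conc hωinv_right hh1 hhf hreg
        hχdef hxD hz hxT le_rfl (by linarith))
    rw [← hΩsub _ _ (by linarith) (by linarith)] at h1
    have h2 := lipschitz_integral_bound hψ_mono hgball hΨsub hxT
      (show T + ‖y - x‖ ≤ tstar by linarith)
    have h3 := hΨmono (T + ‖y - x‖) (T + R) (by linarith) (by linarith)
    have h4 := hΩle (χ - T - R) (χ - T - ‖y - x‖) (by linarith) (by linarith)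
    have h5 : ω (χ - T - ‖y - x‖) ≤ ω (χ - T) :=
      hωm (by simp; linarith) (by simp; linarith) (by linarith)
    have h6 : (R - ‖y - x‖) * ω (χ - T - ‖y - x‖) ≤ (R - ‖y - x‖) * ω (χ - T) :=
      mul_le_mul_of_nonneg_left h5 (by linarith)
    have e : (f y + g y) - (f x + g x) - f' x (y - x)
        = (f y - f x - f' x (y - x)) + (g y - g x) := by abel
    have h7 := norm_add_le (f y - f x - f' x (y - x)) (g y - g x)
    rw [e, hW, hW, ← sub_sub χ T R]
    simp only [hκdef]
    nlinarith
  have hequiv : ∀ x : X, ∀ T : ℝ, ‖x - x₀‖ ≤ T → T ≤ tstar →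
      ∃ B : X ≃L[ℝ] X, (B : X →L[ℝ] X) = f' x ∧ ∀ v, ‖B.symm v‖ ≤ ‖v‖ / κ T := by
    intro x T hxT hT
    have hT0 : 0 ≤ T := (norm_nonneg _).trans hxT
    refine exists_equiv_of_near_id (hκpos T ⟨hT0, hT⟩).1 ?_
    have := regular_smooth_base hx₀ hfx₀ hω_mono hω_conc hωinv_right hh1 hhf hreg hχdef
      (hinD x (by linarith)) hxT (by linarith)
    simp only [hκdef]
    linarith
  let x : ℕ → X := fun n => Nat.rec x₀ (fun _ z => z - (f' z).inverse (f z + g z)) n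
  have hx0 : x 0 = x₀ := rfl
  have hxrec : ∀ n, x (n + 1) = x n - (f' (x n)).inverse (f (x n) + g (x n)) := fun n => rfl
  have hxstep : ∀ n, ∀ B : X ≃L[ℝ] X, (B : X →L[ℝ] X) = f' (x n) →
      x (n + 1) = x n - B.symm (f (x n) + g (x n)) := by
    intro n B hB
    rw [hxrec, ← hB, ContinuousLinearMap.inverse_equiv]
    rfl
  have hκt : ∀ n, 0 < κ (t n) := fun n => (hκpos _ (htmem n)).1
  have hWt : ∀ n, W (t n) = (t (n + 1) - t n) * κ (t n) := by
    intro n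
    rw [htrecW, add_sub_cancel_left, div_mul_cancel₀ _ (hκt n).ne']
  have hstepbound : ∀ n, ‖x n - x₀‖ ≤ t n → ‖f (x n) + g (x n)‖ ≤ W (t n) →
      ‖x (n + 1) - x n‖ ≤ t (n + 1) - t n := by
    intro n h1 h2
    obtain ⟨B, hB, hBn⟩ := hequiv (x n) (t n) h1 (htmem n).2
    rw [hxstep n B hB, sub_sub_cancel_left, norm_neg]
    refine (hBn _).trans ((div_le_iff₀ (hκt n)).2 ?_)
    rw [← hWt]; exact h2
  have hind : ∀ n, ‖x n - x₀‖ ≤ t n ∧ ‖f (x n) + g (x n)‖ ≤ W (t n) := by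
    intro n
    induction n with
    | zero => rw [hx0, ht0, hW0]; simpa using ha
    | succ n ih =>
      have h1 := hstepbound n ih.1 ih.2
      refine ⟨?_, ?_⟩
      · have := norm_sub_le_norm_sub_add_norm_sub (x (n + 1)) (x n) x₀
        linarith [ih.1]
      · have h2 := hmaj (x n) (x (n + 1)) (t n) (t (n + 1) - t n) ih.1 h1
          (by linarith [(htmem (n + 1)).2])
        obtain ⟨B, hB, -⟩ := hequiv (x n) (t n) ih.1 (htmem n).2
        have h3 : f' (x n) (x (n + 1) - x n) = -(f (x n) + g (x n)) := by
          rw [hxstep n B hB, sub_sub_cancel_left, map_neg, ← hB]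
          simp
        rw [h3, sub_neg_eq_add, sub_add_cancel, add_sub_cancel, ← hWt, sub_add_cancel] at h2
        exact h2
  have hstep : ∀ n, ‖x (n + 1) - x n‖ ≤ t (n + 1) - t n := fun n =>
    hstepbound n (hind n).1 (hind n).2
  -- Every root in the ball obeys the error estimate: with `T = t n` and `T + R = tstar`, the right
  -- side of the majorant inequality is exactly `(tstar - t (n + 1)) * κ (t n)`.
  have hroot : ∀ y, ‖y - x₀‖ ≤ tstar → f y + g y = 0 → ∀ n, ‖y - x n‖ ≤ tstar - t n := by
    intro y hy hFy n
    induction n with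
    | zero => rw [hx0, ht0, sub_zero]; exact hy
    | succ n ih =>
      have h2 := hmaj (x n) y (t n) (tstar - t n) (hind n).1 ih (by linarith)
      rw [add_sub_cancel, htstar_zero, hWt, hFy] at h2
      obtain ⟨B, hB, hBn⟩ := hequiv (x n) (t n) (hind n).1 (htmem n).2
      have h3 : y - x (n + 1) =
          -B.symm (0 - (f (x n) + g (x n)) - f' (x n) (y - x n)) := by
        rw [hxstep n B hB, ← hB]
        simp only [zero_sub, map_sub, map_neg, ContinuousLinearEquiv.coe_coe,
          ContinuousLinearEquiv.symm_apply_apply]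
        abel
      rw [h3, norm_neg]
      refine (hBn _).trans ((div_le_iff₀ (hκt n)).2 (h2.trans_eq ?_))
      ring
  have hxball : ∀ n, x n ∈ Metric.closedBall x₀ tstar := fun n =>
    mem_closedBall_iff_norm.2 ((hind n).1.trans (htmem n).2)
  have hcauchy : CauchySeq x := by
    refine cauchySeq_of_dist_le_of_summable (fun n => t (n + 1) - t n) (fun n => ?_) ?_
    · rw [dist_comm, dist_eq_norm]; exact hstep n
    · refine summable_of_sum_range_le (c := tstar)
        (fun n => sub_nonneg.2 (htmono n.le_succ)) fun n => ?_
      rw [Finset.sum_range_sub, ht0, sub_zero]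
      exact (htmem n).2
  obtain ⟨xstar, hxlim⟩ := cauchySeq_tendsto_of_complete hcauchy
  have hxs : xstar ∈ Metric.closedBall x₀ tstar :=
    Metric.isClosed_closedBall.mem_of_tendsto hxlim (Eventually.of_forall hxball)
  have hflim : Tendsto (fun n => f (x n)) atTop (𝓝 (f xstar)) :=
    (hf xstar (hball hxs)).continuousWithinAt.tendsto.comp
      (tendsto_nhdsWithin_iff.2 ⟨hxlim, Eventually.of_forall fun n => hball (hxball n)⟩)
  have hglim : Tendsto (fun n => g (x n)) atTop (𝓝 (g xstar)) := by
    rw [tendsto_iff_norm_sub_tendsto_zero] at hxlim ⊢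
    have h1 := hxlim.const_mul (ψ tstar)
    rw [mul_zero] at h1
    exact squeeze_zero (fun n => norm_nonneg _)
      (fun n => hgball tstar hts0 le_rfl xstar hxs (x n) (hxball n)) h1
  have hWlim : Tendsto (fun n => W (t n)) atTop (𝓝 0) := by
    rw [← htstar_zero]
    exact (hWcont tstar ⟨hts0, le_rfl⟩).tendsto.comp
      (tendsto_nhdsWithin_iff.2 ⟨httend, Eventually.of_forall htmem⟩)
  have hF : f xstar + g xstar = 0 :=
    tendsto_nhds_unique (hflim.add hglim)
      (squeeze_zero_norm (fun n => (hind n).2) hWlim)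
  have hxlim_root : ∀ y ∈ Metric.closedBall x₀ tstar, f y + g y = 0 → y = xstar := by
    intro y hy hFy
    have h1 : Tendsto x atTop (𝓝 y) := by
      rw [tendsto_iff_norm_sub_tendsto_zero]
      have h2 := httend.const_sub tstar
      rw [sub_self] at h2
      refine squeeze_zero (fun n => norm_nonneg _) (fun n => ?_) h2
      rw [norm_sub_rev]
      exact hroot y (mem_closedBall_iff_norm.1 hy) hFy n
    exact tendsto_nhds_unique h1 hxlim
  refine ⟨xstar, hxs, hF, hxlim_root, x, hx0, fun n => ?_, hxball, hxlim, hstep,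
    hroot xstar (mem_closedBall_iff_norm.1 hxs) hF⟩
  obtain ⟨B, hB, -⟩ := hequiv (x n) (t n) (hind n).1 (htmem n).2
  exact ⟨B, hB, hxstep n B hB⟩
end

section
/- Under the hypotheses of the Convergence Theorem (f ω-regularly smooth on D with constant h, f'(x₀) = I, g ψ-Lipschitz in the ball sense with ψ nondecreasing, ‖f(x₀) + g(x₀)‖ ≤ a, W has a unique zero t₊ in [0, χ], B̄(x₀, t₊) ⊆ D, and a < Ω(χ) + h·χ − Ψ(χ)), if the Newton iterates x₁, …, x_k are defined and satisfy ‖x_j − x_{j−1}‖ ≤ t_j − t_{j−1} for j = 1, …, k, then f'(x_k) is invertible and the next iterate satisfies ‖x_{k+1} − x_k‖ ≤ (a − Ω(χ) + Ω(χ − t_k) − t_k·h + Ψ(t_k))/(h + ω(χ − t_k)) = t_{k+1} − t_k. -/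
/-!
The proof is a majorant argument. Concavity of `ω` makes the increment `ω (p + τ) - ω p`
nonincreasing in `p` (`concave_shift`). Regular smoothness at the pair `(x₀, z)` then gives
`‖f' z - I‖ ≤ 1 - h - ω (χ - τ)` whenever `‖z - x₀‖ ≤ τ ≤ χ` (`deriv_sub_id_bound`), so the Banach
lemma inverts `f' z` with `‖(f' z)⁻¹‖ ≤ 1 / (h + ω (χ - τ))`. The same estimate bounds `‖f'‖` from
below along the segment from `x_{k-1}` to `x_k`, which turns regular smoothness into
`‖f' y - f' x_{k-1}‖ ≤ ω c - ω (c - τ)` with `c = χ - t_{k-1}`.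

Since `x_k` is a Newton iterate, the residual `f x_k + g x_k` is the sum of the Taylor remainder of
`f` and the increment of `g` over the last step. The former is controlled by integrating the bound
on `f'` (`taylor_bound`), the latter by Riemann sums of `ψ`, because a point of the segment lies in
a ball around `x₀` whose radius grows linearly along it (`lipschitz_increment_bound`). The two
bounds add up exactly to `W t_k`.

The scalar sequence stays in `[0, t₊]`, hence below `χ`, because `W = Φ_h + Ψ` with `Φ_h` convex
and `Ψ` nondecreasing, so a Newton step from the left of the zero `t₊` does not jump over it.
-/

open Set MeasureTheory intervalIntegral

/-- Increments of a concave function over intervals of fixed length decrease. -/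
lemma concave_shift {ω : ℝ → ℝ} (hconc : ConcaveOn ℝ (Ici 0) ω) {p q τ : ℝ}
    (hp : 0 ≤ p) (hpq : p ≤ q) (hτ : 0 ≤ τ) : ω (q + τ) - ω q ≤ ω (p + τ) - ω p := by
  rcases eq_or_lt_of_le hτ with rfl | hτ
  · simp
  have hs : 0 < q - p + τ := by linarith
  -- `p + τ` and `q` are the convex combinations of `p` and `q + τ` with swapped weights.
  set l := (q - p) / (q - p + τ) with hl
  have hl0 : 0 ≤ l := div_nonneg (by linarith) hs.le
  have hl1 : 0 ≤ 1 - l := by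
    have : l ≤ 1 := (div_le_one hs).2 (by linarith)
    linarith
  have hl' : l * (q - p + τ) = q - p := div_mul_cancel₀ _ hs.ne'
  have hp' : p ∈ Ici (0 : ℝ) := hp
  have hq' : q + τ ∈ Ici (0 : ℝ) := by simp only [mem_Ici]; linarith
  have h1 := hconc.2 hp' hq' hl0 hl1 (by ring)
  have h2 := hconc.2 hp' hq' hl1 hl0 (by ring)
  simp only [smul_eq_mul] at h1 h2
  have e1 : l * p + (1 - l) * (q + τ) = p + τ := by linarith
  have e2 : (1 - l) * p + l * (q + τ) = q := by linarith
  rw [e1] at h1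
  rw [e2] at h2
  linarith

/-- The regular-smoothness inequality solved for the increment `d`. -/
lemma regular_increment {ω ωinv : ℝ → ℝ} (hmono : StrictMonoOn ω (Ici 0))
    (hinv : ∀ s, 0 ≤ s → 0 ≤ ωinv s ∧ ω (ωinv s) = s) {s d r : ℝ} (hs : 0 ≤ s) (hd : 0 ≤ d)
    (hr : 0 ≤ r) (hreg : ωinv (s + d) - ωinv s ≤ r) :
    s + d ≤ ω (ωinv s + r) := by
  obtain ⟨h1, -⟩ := hinv s hs
  obtain ⟨h3, h4⟩ := hinv (s + d) (by linarith)
  calc s + d = ω (ωinv (s + d)) := h4.symm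
    _ ≤ ω (ωinv s + r) := hmono.monotoneOn h3 (by simp only [mem_Ici]; linarith) (by linarith)

/-- The increment `d` is at most that of `ω` over `[p, p + r]` for any `p` to the left of `ωinv s`. -/
lemma regular_increment_of_le {ω ωinv : ℝ → ℝ} (hmono : StrictMonoOn ω (Ici 0))
    (hconc : ConcaveOn ℝ (Ici 0) ω)
    (hinv : ∀ s, 0 ≤ s → 0 ≤ ωinv s ∧ ω (ωinv s) = s) {s d r p : ℝ} (hs : 0 ≤ s) (hd : 0 ≤ d)
    (hr : 0 ≤ r) (hreg : ωinv (s + d) - ωinv s ≤ r) (hp : 0 ≤ p) (hps : p ≤ ωinv s) :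
    d ≤ ω (p + r) - ω p := by
  have h1 := regular_increment hmono hinv hs hd hr hreg
  have h2 := concave_shift hconc hp hps hr
  rw [(hinv s hs).2] at h2
  linarith

/-- Distance of `T = f' z` from the identity, for `z` within `τ` of the base point. Only the
consequence of regular smoothness at the pair `(x₀, z)` is used. -/
lemma deriv_sub_id_bound {X : Type*} [NormedAddCommGroup X] [NormedSpace ℝ X] [Nontrivial X]
    {ω ωinv : ℝ → ℝ} (hmono : StrictMonoOn ω (Ici 0))
    (hconc : ConcaveOn ℝ (Ici 0) ω)
    (hinv : ∀ s, 0 ≤ s → 0 ≤ ωinv s ∧ ω (ωinv s) = s) {h χ τ : ℝ} (hh1 : h ≤ 1)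
    (hχ : χ = ωinv (1 - h)) (T : X →L[ℝ] X) (hT : h ≤ ‖T‖) (hτ0 : 0 ≤ τ) (hτχ : τ ≤ χ)
    (hreg : ωinv (min ‖ContinuousLinearMap.id ℝ X‖ ‖T‖ - h + ‖T - ContinuousLinearMap.id ℝ X‖)
        - ωinv (min ‖ContinuousLinearMap.id ℝ X‖ ‖T‖ - h) ≤ τ) :
    ‖T - ContinuousLinearMap.id ℝ X‖ ≤ 1 - (h + ω (χ - τ)) := by
  have hid : ‖ContinuousLinearMap.id ℝ X‖ = 1 := ContinuousLinearMap.norm_id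
  rw [hid] at hreg
  set d := ‖T - ContinuousLinearMap.id ℝ X‖ with hd
  have hd0 : 0 ≤ d := norm_nonneg _
  have hm : 0 ≤ min 1 ‖T‖ - h := sub_nonneg.2 (le_min hh1 hT)
  have hmd : 1 - d ≤ min 1 ‖T‖ := by
    refine le_min (by linarith) ?_
    have := norm_sub_norm_le (ContinuousLinearMap.id ℝ X) T
    rw [norm_sub_rev, hid] at this
    linarith
  have hωχ : ω χ = 1 - h := by rw [hχ]; exact (hinv _ (by linarith)).2
  rcases le_or_gt (χ - τ) (ωinv (min 1 ‖T‖ - h)) with hσ | hσ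
  · have := regular_increment_of_le hmono hconc hinv hm hd0 hτ0 hreg (by linarith) hσ
    rw [sub_add_cancel, hωχ] at this
    linarith
  · exfalso
    have h1 := regular_increment hmono hinv hm hd0 hτ0 hreg
    have h0 := (hinv _ hm).1
    have h2 := hmono (a := ωinv (min 1 ‖T‖ - h) + τ) (b := χ)
      (by simp only [mem_Ici]; linarith) (by simp only [mem_Ici]; linarith) (by linarith)
    rw [hωχ] at h2
    linarith

/-- Banach's lemma on operators close to the identity. -/
lemma banach_inverse {X : Type*} [NormedAddCommGroup X] [NormedSpace ℝ X] [CompleteSpace X]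
    (T : X →L[ℝ] X) {q : ℝ} (hq : 0 < q) (hT : ‖T - ContinuousLinearMap.id ℝ X‖ ≤ 1 - q) :
    ∃ A : X ≃L[ℝ] X, (A : X →L[ℝ] X) = T ∧ ∀ y, ‖A.symm y‖ ≤ ‖y‖ / q := by
  have hlt : ‖ContinuousLinearMap.id ℝ X - T‖ < 1 := by rw [norm_sub_rev]; linarith
  let A : X ≃L[ℝ] X := ContinuousLinearEquiv.unitsEquiv ℝ X
    (Units.oneSub (ContinuousLinearMap.id ℝ X - T) hlt)
  have hA : (A : X →L[ℝ] X) = T := by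
    ext y
    change ((1 : X →L[ℝ] X) - (ContinuousLinearMap.id ℝ X - T)) y = T y
    simp
  refine ⟨A, hA, fun y => ?_⟩
  have hy : T (A.symm y) = y := by rw [← hA]; simp
  have h1 := (T - ContinuousLinearMap.id ℝ X).le_of_opNorm_le hT (A.symm y)
  simp only [_root_.sub_apply, hy, ContinuousLinearMap.id_apply] at h1
  have h2 := norm_sub_norm_le (A.symm y) y
  rw [norm_sub_rev] at h2
  rw [le_div_iff₀ hq]
  linarith

/-- If `f' y - f' z` is bounded along the segment from `z` to `z + v` by the increments of `ω` to
the left of `c`, the Taylor remainder is bounded by the integral of these increments. -/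
lemma taylor_bound_s16 {X : Type*} [NormedAddCommGroup X] [NormedSpace ℝ X]
    {D : Set X} {f : X → X} {f' : X → X →L[ℝ] X}
    (hf : ∀ x ∈ D, HasFDerivWithinAt f (f' x) D x) {ω Ω : ℝ → ℝ}
    (hcont : ContinuousOn ω (Ici 0)) (hΩ : ∀ t, Ω t = ∫ τ in (0 : ℝ)..t, ω τ)
    {z v : X} {c Δ : ℝ} (hΔ : 0 ≤ Δ) (hcΔ : Δ < c) (hv : ‖v‖ ≤ Δ)
    (hseg : ∀ θ ∈ Icc (0 : ℝ) 1, z + θ • v ∈ D)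
    (hbd : ∀ θ ∈ Icc (0 : ℝ) 1, ‖f' (z + θ • v) - f' z‖ ≤ ω c - ω (c - θ * Δ)) :
    ‖f (z + v) - f z - f' z v‖ ≤ Δ * ω c - Ω c + Ω (c - Δ) := by
  have hΩd : ∀ s, 0 < s → HasDerivAt Ω (ω s) s := by
    intro s hs
    have hfun : Ω = fun t => ∫ τ in (0 : ℝ)..t, ω τ := funext hΩ
    rw [hfun]
    refine integral_hasDerivAt_right ?_ ?_ ?_
    · refine (hcont.mono ?_).intervalIntegrable
      rw [uIcc_of_le hs.le]
      exact Icc_subset_Ici_self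
    · exact (hcont.mono Ioi_subset_Ici_self).stronglyMeasurableAtFilter isOpen_Ioi s hs
    · exact hcont.continuousAt (Ici_mem_nhds hs)
  have hline : ∀ θ : ℝ, HasDerivAt (fun θ : ℝ => z + θ • v) v θ := by
    intro θ
    simpa using ((hasDerivAt_id θ).smul_const v).const_add z
  set u : ℝ → X := fun θ => f (z + θ • v) - f z - θ • f' z v with hu
  have hud : ∀ θ ∈ Icc (0 : ℝ) 1,
      HasDerivWithinAt u (f' (z + θ • v) v - f' z v) (Icc 0 1) θ := by
    intro θ hθ
    have h1 := (hf _ (hseg θ hθ)).comp_hasDerivWithinAt θ (hline θ).hasDerivWithinAt hseg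
    have h2 : HasDerivWithinAt (fun θ : ℝ => θ • f' z v) (f' z v) (Icc 0 1) θ := by
      simpa using ((hasDerivAt_id θ).smul_const (f' z v)).hasDerivWithinAt
    exact (h1.sub_const (f z)).sub h2
  have hpos : ∀ θ ∈ Icc (0 : ℝ) 1, 0 < c - θ * Δ := by
    intro θ hθ
    nlinarith [hθ.1, hθ.2]
  set B : ℝ → ℝ := fun θ => θ * (Δ * ω c) - Ω c + Ω (c - θ * Δ) with hB
  have hBd : ∀ θ ∈ Icc (0 : ℝ) 1, HasDerivAt B ((ω c - ω (c - θ * Δ)) * Δ) θ := by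
    intro θ hθ
    have h1 : HasDerivAt (fun θ : ℝ => c - θ * Δ) (-Δ) θ := by
      simpa using ((hasDerivAt_id θ).mul_const Δ).const_sub c
    have h2 := (hΩd _ (hpos θ hθ)).comp θ h1
    have h3 : HasDerivAt (fun θ : ℝ => θ * (Δ * ω c) - Ω c) (Δ * ω c) θ := by
      simpa using ((hasDerivAt_id θ).mul_const (Δ * ω c)).sub_const (Ω c)
    refine (h3.add h2).congr_deriv ?_
    ring
  have key := image_norm_le_of_norm_deriv_right_le_deriv_boundary' (f := u) (B := B)
    (f' := fun θ => f' (z + θ • v) v - f' z v) (B' := fun θ => (ω c - ω (c - θ * Δ)) * Δ)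
    (a := 0) (b := 1)
    (fun θ hθ => (hud θ hθ).continuousWithinAt)
    (fun θ hθ => (hud θ (Ico_subset_Icc_self hθ)).mono_of_mem_nhdsWithin
      (Icc_mem_nhdsGE_of_mem hθ))
    (by simp [hu, hB])
    (fun θ hθ => (hBd θ hθ).continuousAt.continuousWithinAt)
    (fun θ hθ => (hBd θ (Ico_subset_Icc_self hθ)).hasDerivWithinAt)
    (fun θ hθ => by
      have h1 := hbd θ (Ico_subset_Icc_self hθ)
      calc ‖f' (z + θ • v) v - f' z v‖ = ‖(f' (z + θ • v) - f' z) v‖ := by simp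
        _ ≤ ‖f' (z + θ • v) - f' z‖ * ‖v‖ := ContinuousLinearMap.le_opNorm _ _
        _ ≤ (ω c - ω (c - θ * Δ)) * Δ :=
          mul_le_mul h1 hv (norm_nonneg _) ((norm_nonneg _).trans h1))
  have := key (x := 1) (by simp)
  simpa [hu, hB] using this

/-- A curve `u` on `[0, 1]` with `‖u r - u s‖ ≤ ψ (b + r Δ) (r - s) Δ` has total increment at most
`∫ ψ` over `[b, b + Δ]`: the upper Riemann sum over `n` equal pieces exceeds the integral by
at most `Δ / n * (ψ (b + Δ) - ψ b)`. -/
lemma lipschitz_increment_bound {X : Type*} [NormedAddCommGroup X]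
    {ψ : ℝ → ℝ} (hψ : MonotoneOn ψ (Ici 0)) {b Δ : ℝ} (hb : 0 ≤ b) (hΔ : 0 ≤ Δ) (u : ℝ → X)
    (hu : ∀ s r, 0 ≤ s → s ≤ r → r ≤ 1 → ‖u r - u s‖ ≤ ψ (b + r * Δ) * ((r - s) * Δ)) :
    ‖u 1 - u 0‖ ≤ ∫ τ in b..(b + Δ), ψ τ := by
  have hint : ∀ p q, 0 ≤ p → 0 ≤ q → IntervalIntegrable ψ volume p q := by
    intro p q hp hq
    refine (hψ.mono ?_).intervalIntegrable
    intro y hy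
    exact (le_min hp hq).trans hy.1
  have hsum : ∀ n : ℕ, 0 < n →
      ‖u 1 - u 0‖ ≤ (∫ τ in b..(b + Δ), ψ τ) + Δ * (ψ (b + Δ) - ψ b) / n := by
    intro n hn
    have hn' : (0 : ℝ) < n := by exact_mod_cast hn
    have hstep : ∀ i : ℕ, i ≤ n → ‖u (i / n) - u 0‖ ≤
        (∫ τ in b..(b + i / n * Δ), ψ τ) + Δ / n * (ψ (b + i / n * Δ) - ψ b) := by
      intro i
      induction i with
      | zero => intro _; simp
      | succ i ih =>
        intro hi
        have ih := ih (by omega)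
        have hi' : ((i + 1 : ℕ) : ℝ) / n ≤ 1 := by
          rw [div_le_one hn']; exact_mod_cast hi
        have hs0 : (0 : ℝ) ≤ (i : ℝ) / n := by positivity
        have hr : ((i + 1 : ℕ) : ℝ) / n = i / n + 1 / n := by push_cast; ring
        have hn1 : (0 : ℝ) < 1 / n := by positivity
        set s : ℝ := (i : ℝ) / n with hs
        set r : ℝ := ((i + 1 : ℕ) : ℝ) / n with hr_def
        have h1 := hu s r hs0 (by linarith) hi'
        have hp : 0 ≤ b + s * Δ := by positivity
        have hle : b + s * Δ ≤ b + r * Δ := by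
          have := mul_le_mul_of_nonneg_right (show s ≤ r by linarith) hΔ
          linarith
        have hq : 0 ≤ b + r * Δ := hp.trans hle
        have h2 : ψ (b + s * Δ) * ((r - s) * Δ) ≤ ∫ τ in (b + s * Δ)..(b + r * Δ), ψ τ := by
          have h3 : ∫ τ in (b + s * Δ)..(b + r * Δ), ψ (b + s * Δ) ≤
              ∫ τ in (b + s * Δ)..(b + r * Δ), ψ τ :=
            integral_mono_on hle (by simp) (hint _ _ hp hq)
              (fun y hy => hψ hp (hp.trans hy.1) hy.1)
          rw [intervalIntegral.integral_const, smul_eq_mul] at h3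
          linarith
        have h4 := integral_add_adjacent_intervals (hint b _ hb hp) (hint _ _ hp hq)
        have h5 : (r - s) * Δ = Δ / n := by rw [hr]; ring
        rw [h5] at h1 h2
        have h6 := norm_sub_le_norm_sub_add_norm_sub (u r) (u s) (u 0)
        linarith
    have := hstep n le_rfl
    rw [div_self hn'.ne', one_mul] at this
    refine this.trans (le_of_eq ?_)
    ring
  have hlim : Filter.Tendsto
      (fun n : ℕ => (∫ τ in b..(b + Δ), ψ τ) + Δ * (ψ (b + Δ) - ψ b) / n)
      Filter.atTop (nhds ((∫ τ in b..(b + Δ), ψ τ) + 0)) :=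
    tendsto_const_nhds.add (tendsto_const_div_atTop_nhds_zero_nat _)
  rw [add_zero] at hlim
  exact ge_of_tendsto hlim (Filter.eventually_atTop.2 ⟨1, fun n hn => hsum n hn⟩)

/-- induction step of the Convergence Theorem: Under the hypotheses of the
Convergence Theorem, if the Newton iterates `x₁, …, x_k` are defined and satisfy
`‖x_j - x_{j-1}‖ ≤ t_j - t_{j-1}` for `j = 1, …, k`, then `f'(x_k)` is invertible and
the next iterate satisfies
`‖x_{k+1} - x_k‖ ≤ (a - Ω(χ) + Ω(χ - t_k) - t_k·h + Ψ(t_k)) / (h + ω(χ - t_k))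
  = t_{k+1} - t_k`. -/
theorem newton_induction_step
    {X : Type*} [NormedAddCommGroup X] [NormedSpace ℝ X] [CompleteSpace X]
    (D : Set X) (hD : Convex ℝ D) (x₀ : X) (hx₀ : x₀ ∈ D)
    (f g : X → X) (f' : X → X →L[ℝ] X)
    (hf : ∀ x ∈ D, HasFDerivWithinAt f (f' x) D x)
    (hfx₀ : f' x₀ = ContinuousLinearMap.id ℝ X)
    (ω ωinv ψ : ℝ → ℝ)
    (hω_cont : ContinuousOn ω (Set.Ici 0))
    (hω_mono : StrictMonoOn ω (Set.Ici 0))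
    (hω_conc : ConcaveOn ℝ (Set.Ici 0) ω)
    (hω0 : ω 0 = 0)
    (hω_nonneg : ∀ t, 0 ≤ t → 0 ≤ ω t)
    (hωinv_left : ∀ t, 0 ≤ t → ωinv (ω t) = t)
    (hωinv_right : ∀ s, 0 ≤ s → 0 ≤ ωinv s ∧ ω (ωinv s) = s)
    (h : ℝ) (hh0 : 0 ≤ h) (hh1 : h ≤ 1) (hhf : ∀ x ∈ D, h ≤ ‖f' x‖)
    (hreg : ∀ x' ∈ D, ∀ x'' ∈ D,
      ωinv (min ‖f' x'‖ ‖f' x''‖ - h + ‖f' x'' - f' x'‖)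
        - ωinv (min ‖f' x'‖ ‖f' x''‖ - h) ≤ ‖x'' - x'‖)
    (hψ_mono : MonotoneOn ψ (Set.Ici 0))
    (hψ_nonneg : ∀ t, 0 ≤ t → 0 ≤ ψ t)
    (hg : ∀ t, 0 ≤ t → Metric.closedBall x₀ t ⊆ D →
      ∀ x' ∈ Metric.closedBall x₀ t, ∀ x'' ∈ Metric.closedBall x₀ t,
        ‖g x'' - g x'‖ ≤ ψ t * ‖x'' - x'‖)
    (a : ℝ) (ha_pos : 0 < a) (ha : ‖f x₀ + g x₀‖ ≤ a)
    (χ : ℝ) (hχdef : χ = ωinv (1 - h))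
    (Ω Ψ W : ℝ → ℝ)
    (hΩ : ∀ t, Ω t = ∫ τ in (0:ℝ)..t, ω τ)
    (hΨ : ∀ t, Ψ t = ∫ τ in (0:ℝ)..t, ψ τ)
    (hW : ∀ t, W t = a - Ω χ + Ω (χ - t) - t * h + Ψ t)
    (tstar : ℝ) (htstar_mem : tstar ∈ Set.Icc 0 χ) (htstar_zero : W tstar = 0)
    (htstar_uniq : ∀ s ∈ Set.Icc 0 χ, W s = 0 → s = tstar)
    (hball : Metric.closedBall x₀ tstar ⊆ D)
    (hcond : a < Ω χ + h * χ - Ψ χ)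
    (t : ℕ → ℝ) (ht0 : t 0 = 0)
    (htrec : ∀ n, t (n + 1) =
      t n + (a - Ω χ + Ω (χ - t n) - t n * h + Ψ (t n)) / (h + ω (χ - t n)))
    (k : ℕ) (x : ℕ → X) (hx0 : x 0 = x₀)
    (hxdef : ∀ j < k, ∃ A : X ≃L[ℝ] X, (A : X →L[ℝ] X) = f' (x j) ∧
      x (j + 1) = x j - A.symm (f (x j) + g (x j)))
    (hxstep : ∀ j < k, ‖x (j + 1) - x j‖ ≤ t (j + 1) - t j) :
    ∃ A : X ≃L[ℝ] X, (A : X →L[ℝ] X) = f' (x k) ∧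
      ‖A.symm (f (x k) + g (x k))‖ ≤
        (a - Ω χ + Ω (χ - t k) - t k * h + Ψ (t k)) / (h + ω (χ - t k)) ∧
      (a - Ω χ + Ω (χ - t k) - t k * h + Ψ (t k)) / (h + ω (χ - t k)) = t (k + 1) - t k := by
  have hint : ∀ p q, 0 ≤ p → 0 ≤ q → IntervalIntegrable ω volume p q := by
    intro p q hp hq
    exact (hω_mono.monotoneOn.mono fun y hy => (le_min hp hq).trans hy.1).intervalIntegrable
  have hψint : ∀ p q, 0 ≤ p → 0 ≤ q → IntervalIntegrable ψ volume p q := by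
    intro p q hp hq
    exact (hψ_mono.mono fun y hy => (le_min hp hq).trans hy.1).intervalIntegrable
  have hΨsub : ∀ p q, 0 ≤ p → 0 ≤ q → Ψ q - Ψ p = ∫ τ in p..q, ψ τ := by
    intro p q hp hq
    rw [hΨ, hΨ, integral_interval_sub_left (hψint 0 q le_rfl hq) (hψint 0 p le_rfl hp)]
  have hωχ : ω χ = 1 - h := by rw [hχdef]; exact (hωinv_right _ (by linarith)).2
  have hχ0 : 0 ≤ χ := htstar_mem.1.trans htstar_mem.2
  have htχ : tstar < χ := by
    refine lt_of_le_of_ne htstar_mem.2 fun heq => ?_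
    have hΩ0 : Ω 0 = 0 := by rw [hΩ]; simp
    rw [hW, heq, sub_self, hΩ0] at htstar_zero
    linarith
  have hpos : ∀ s, s ≤ tstar → 0 < h + ω (χ - s) := by
    intro s hs
    have h1 := hω_mono (a := 0) (b := χ - s) (by simp) (by simp only [mem_Ici]; linarith)
      (by linarith)
    rw [hω0] at h1
    linarith
  -- A scalar Newton step from `s ≤ t₊` does not pass `t₊`.
  have hstep_le : ∀ s, 0 ≤ s → s ≤ tstar →
      (a - Ω χ + Ω (χ - s) - s * h + Ψ s) / (h + ω (χ - s)) ≤ tstar - s := by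
    intro s hs0 hs
    rw [div_le_iff₀ (hpos s hs)]
    have h1 : Ω (χ - s) - Ω (χ - tstar) ≤ (tstar - s) * ω (χ - s) := by
      rw [hΩ, hΩ, integral_interval_sub_left (hint 0 _ le_rfl (by linarith))
        (hint 0 _ le_rfl (by linarith))]
      have h3 : ∫ τ in (χ - tstar)..(χ - s), ω τ ≤ ∫ τ in (χ - tstar)..(χ - s), ω (χ - s) :=
        integral_mono_on (by linarith) (hint _ _ (by linarith) (by linarith)) (by simp)
          (fun y hy => hω_mono.monotoneOn
            (by simp only [mem_Ici]; linarith [hy.1]) (by simp only [mem_Ici]; linarith) hy.2)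
      rw [intervalIntegral.integral_const, smul_eq_mul] at h3
      linarith
    have h2 : Ψ s ≤ Ψ tstar := by
      have h4 := hΨsub s tstar hs0 htstar_mem.1
      have h5 : 0 ≤ ∫ τ in s..tstar, ψ τ :=
        integral_nonneg hs (fun y hy => hψ_nonneg y (hs0.trans hy.1))
      linarith
    rw [hW] at htstar_zero
    linarith
  have htk : ∀ j ≤ k, 0 ≤ t j ∧ t j ≤ tstar ∧ ‖x j - x₀‖ ≤ t j := by
    intro j
    induction j with
    | zero => intro _; simp [ht0, hx0, htstar_mem.1]
    | succ j ih =>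
      intro hj
      obtain ⟨h1, h2, h3⟩ := ih (by omega)
      have h4 := hxstep j (by omega)
      have h5 := hstep_le _ h1 h2
      have h6 := norm_sub_le_norm_sub_add_norm_sub (x (j + 1)) (x j) x₀
      have h7 := htrec j
      have h8 := norm_nonneg (x (j + 1) - x j)
      exact ⟨by linarith, by linarith, by linarith⟩
  obtain ⟨hk0, hk1, hk2⟩ := htk k le_rfl
  have hballD : ∀ z, ‖z - x₀‖ ≤ tstar → z ∈ D := fun z hz =>
    hball (by rwa [Metric.mem_closedBall, dist_eq_norm])
  have hrec : (a - Ω χ + Ω (χ - t k) - t k * h + Ψ (t k)) / (h + ω (χ - t k))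
      = t (k + 1) - t k := by
    rw [htrec k]; ring
  -- In the zero space `‖id‖ = 0`, but there both derivative bounds hold by monotonicity of `ω`.
  have hbound : ∀ z τ, ‖z - x₀‖ ≤ τ → τ ≤ tstar →
      ‖f' z - ContinuousLinearMap.id ℝ X‖ ≤ 1 - (h + ω (χ - τ)) := by
    intro z τ hz hτ
    have hτ0 : 0 ≤ τ := (norm_nonneg _).trans hz
    have hzD := hballD z (hz.trans hτ)
    rcases subsingleton_or_nontrivial X with hX | hX
    · rw [Subsingleton.elim (f' z - ContinuousLinearMap.id ℝ X) 0, norm_zero]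
      have := hω_mono.monotoneOn (a := χ - τ) (b := χ) (by simp only [mem_Ici]; linarith)
        hχ0 (by linarith)
      linarith
    · have hr := hreg x₀ hx₀ z hzD
      rw [hfx₀] at hr
      exact deriv_sub_id_bound hω_mono hω_conc hωinv_right hh1 hχdef (f' z) (hhf z hzD) hτ0
        (by linarith) (hr.trans hz)
  have hdiff : ∀ z y τ r, ‖z - x₀‖ ≤ τ → ‖y - z‖ ≤ r → τ + r ≤ tstar →
      ‖f' y - f' z‖ ≤ ω (χ - τ) - ω (χ - τ - r) := by
    intro z y τ r hz hy hτr
    have hτ0 : 0 ≤ τ := (norm_nonneg _).trans hz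
    have hr0 : 0 ≤ r := (norm_nonneg _).trans hy
    have hy' : ‖y - x₀‖ ≤ τ + r := by
      have := norm_sub_le_norm_sub_add_norm_sub y z x₀
      linarith
    have hp : 0 ≤ χ - τ - r := by linarith
    rcases subsingleton_or_nontrivial X with hX | hX
    · rw [Subsingleton.elim (f' y - f' z) 0, norm_zero, sub_nonneg]
      exact hω_mono.monotoneOn hp (by simp only [mem_Ici]; linarith) (by linarith)
    · have hlow : ∀ w, ‖w - x₀‖ ≤ τ + r → h + ω (χ - τ - r) ≤ ‖f' w‖ := by
        intro w hw
        have h1 := hbound w (τ + r) hw hτr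
        have h2 := norm_sub_norm_le (ContinuousLinearMap.id ℝ X) (f' w)
        rw [norm_sub_rev, ContinuousLinearMap.norm_id] at h2
        rw [sub_sub χ]
        linarith
      have hzD := hballD z (by linarith)
      have hyD := hballD y (by linarith)
      have hm : 0 ≤ min ‖f' z‖ ‖f' y‖ - h := sub_nonneg.2 (le_min (hhf z hzD) (hhf y hyD))
      have hσ : χ - τ - r ≤ ωinv (min ‖f' z‖ ‖f' y‖ - h) := by
        obtain ⟨h1, h2⟩ := hωinv_right _ hm
        refine (hω_mono.le_iff_le hp h1).1 ?_
        rw [h2]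
        have := le_min (hlow z (by linarith)) (hlow y hy')
        linarith
      have := regular_increment_of_le hω_mono hω_conc hωinv_right hm (norm_nonneg _) hr0
        ((hreg z hzD y hyD).trans hy) hp hσ
      rwa [sub_add_cancel] at this
  have hres : ‖f (x k) + g (x k)‖ ≤ a - Ω χ + Ω (χ - t k) - t k * h + Ψ (t k) := by
    rcases k with _ | m
    · have hΨ0 : Ψ 0 = 0 := by rw [hΨ]; simp
      rw [hx0, ht0, hΨ0]
      simpa using ha
    · obtain ⟨hm0, hm1, hm2⟩ := htk m (by omega)
      obtain ⟨A, hA, hxm⟩ := hxdef m (by omega)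
      have hv := hxstep m (by omega)
      set Δ := t (m + 1) - t m with hΔdef
      set v := x (m + 1) - x m with hvdef
      have hΔ0 : 0 ≤ Δ := (norm_nonneg _).trans hv
      have hxv : x m + v = x (m + 1) := by rw [hvdef]; abel
      -- The Newton equation at step `m`.
      have hnewton : f' (x m) v = -(f (x m) + g (x m)) := by
        have : v = -A.symm (f (x m) + g (x m)) := by rw [hvdef, hxm]; abel
        rw [← hA, this]
        simp
      have hθv : ∀ θ : ℝ, 0 ≤ θ → ‖θ • v‖ ≤ θ * Δ := by
        intro θ hθ
        rw [norm_smul, Real.norm_of_nonneg hθ]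
        exact mul_le_mul_of_nonneg_left hv hθ
      have hnear : ∀ θ : ℝ, 0 ≤ θ → ‖x m + θ • v - x₀‖ ≤ t m + θ * Δ := by
        intro θ hθ
        have h1 := norm_add_le (x m - x₀) (θ • v)
        rw [sub_add_eq_add_sub] at h1
        linarith [hθv θ hθ]
      have hrad : ∀ θ : ℝ, θ ≤ 1 → t m + θ * Δ ≤ tstar := by
        intro θ hθ
        have := mul_le_mul_of_nonneg_right hθ hΔ0
        linarith
      have hT := taylor_bound_s16 (z := x m) (v := v) (c := χ - t m) (Δ := Δ) hf hω_cont hΩ hΔ0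
        (by linarith) hv
        (fun θ hθ => hballD _ ((hnear θ hθ.1).trans (hrad θ hθ.2)))
        (fun θ hθ => hdiff (x m) _ (t m) (θ * Δ) hm2
          (by rw [add_sub_cancel_left]; exact hθv θ hθ.1) (hrad θ hθ.2))
      have hG := lipschitz_increment_bound hψ_mono hm0 hΔ0 (fun θ => g (x m + θ • v)) (by
        intro s r hs hsr hr
        have hr0 := hs.trans hsr
        have hsr' := mul_le_mul_of_nonneg_right hsr hΔ0
        have hR : 0 ≤ t m + r * Δ := by positivity
        have h1 := hg (t m + r * Δ) hR
          ((Metric.closedBall_subset_closedBall (hrad r hr)).trans hball)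
          (x m + s • v) (by rw [Metric.mem_closedBall, dist_eq_norm]; linarith [hnear s hs])
          (x m + r • v) (by rw [Metric.mem_closedBall, dist_eq_norm]; exact hnear r hr0)
        refine h1.trans (mul_le_mul_of_nonneg_left ?_ (hψ_nonneg _ hR))
        rw [add_sub_add_left_eq_sub, ← sub_smul]
        exact hθv _ (by linarith))
      have hend : t m + Δ = t (m + 1) := by rw [hΔdef]; ring
      rw [hend, ← hΨsub _ _ hm0 hk0] at hG
      have hc : χ - t m - Δ = χ - t (m + 1) := by rw [hΔdef]; ring
      rw [hc, hxv, hnewton] at hT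
      simp only [one_smul, zero_smul, add_zero, hxv] at hG
      have hW' : Δ * (h + ω (χ - t m)) = a - Ω χ + Ω (χ - t m) - t m * h + Ψ (t m) := by
        rw [← eq_div_iff (hpos _ hm1).ne', hΔdef, htrec m]
        ring
      have hsplit : f (x (m + 1)) + g (x (m + 1)) =
          (f (x (m + 1)) - f (x m) - -(f (x m) + g (x m))) + (g (x (m + 1)) - g (x m)) := by
        abel
      rw [hsplit]
      refine (norm_add_le _ _).trans ((add_le_add hT hG).trans (le_of_eq ?_))
      linear_combination hW' - h * hΔdef
  obtain ⟨A, hA, hAinv⟩ := banach_inverse (f' (x k)) (hpos _ hk1) (hbound _ _ hk2 hk1)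
  exact ⟨A, hA, (hAinv _).trans (div_le_div_of_nonneg_right hres (hpos _ hk1).le), hrec⟩
end
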